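/- Let f be an M-map with f(∅) ≠ 0, let a ⊆ Ω and let i ∈ Ω with i ∉ a. Then log* f(a ∪ {i}) = Σ_{b ⊆ a} f(b ∪ {i}) · f^{-1*}(a \ b), where f^{-1*} is the convolution inverse of f given by f^{-1*}(∅) = 1/f(∅) and f^{-1*}(c) = Σ_{p} |p|!·(−1)^{|p|}·(∏_{d ∈ p} f(d)) / f(∅)^{|p|+1} for nonempty c (sum over set partitions p of c). -/

import Mathlib

open Finset

/-- The convolution product of M-maps: `(f * g)(a) = ∑_{b ⊆ a} f(b) · g(a \ b)`. -/
noncomputable def MMap.conv {Ω : Type*} [DecidableEq Ω] (f g : Finset Ω → ℂ) : Finset Ω → ℂ :=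
  fun a => ∑ b ∈ a.powerset, f b * g (a \ b)

/-- The cumulant `log* f` on nonempty subsets:
`log* f(a) = ∑_p (|p|−1)!·(−1)^{|p|−1}·(∏_{c ∈ p} f(c))/f(∅)^{|p|}`,
summed over all set partitions `p` of `a`, `|p|` being the number of blocks. -/
noncomputable def MMap.logStar {Ω : Type*} [DecidableEq Ω] (f : Finset Ω → ℂ) :
    Finset Ω → ℂ := fun a =>
  ∑ p : Finpartition a,
    (Nat.factorial (p.parts.card - 1) : ℂ) * (-1 : ℂ) ^ (p.parts.card - 1) *
      (∏ c ∈ p.parts, f c) / (f ∅) ^ p.parts.card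

/-- The explicit convolution inverse `f^{-1*}`: `f^{-1*}(∅) = 1/f(∅)` and, for
nonempty `c`, `f^{-1*}(c) = ∑_p |p|!·(−1)^{|p|}·(∏_{d ∈ p} f(d))/f(∅)^{|p|+1}`,
summed over all set partitions `p` of `c`. -/
noncomputable def MMap.invStar {Ω : Type*} [DecidableEq Ω] (f : Finset Ω → ℂ) :
    Finset Ω → ℂ := fun c =>
  if c = ∅ then 1 / f ∅ else
    ∑ p : Finpartition c,
      (Nat.factorial p.parts.card : ℂ) * (-1 : ℂ) ^ p.parts.card * (∏ d ∈ p.parts, f d) /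
        (f ∅) ^ (p.parts.card + 1)

theorem MMap.invStar_eq {Ω : Type*} [DecidableEq Ω] (f : Finset Ω → ℂ) (c : Finset Ω) :
    MMap.invStar f c = ∑ p : Finpartition c,
      (Nat.factorial p.parts.card : ℂ) * (-1 : ℂ) ^ p.parts.card * (∏ d ∈ p.parts, f d) /
        (f ∅) ^ (p.parts.card + 1) := by
  unfold MMap.invStar
  split_ifs with h
  · subst h
    have key : ∀ p : Finpartition (∅ : Finset Ω), p.parts = ∅ := fun p =>
      Finpartition.parts_eq_empty_iff.2 rfl
    have hc : Fintype.card (Finpartition (∅ : Finset Ω)) = 1 :=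
      Fintype.card_eq_one_iff.2 ⟨Finpartition.empty _, fun p => by
        ext1
        rw [key, key]⟩
    simp [key, hc]
  · rfl

theorem MMap.disj_aux {Ω : Type*} [DecidableEq Ω] (a : Finset Ω) (i : Ω) (hi : i ∉ a)
    (b : Finset Ω) : Disjoint (a \ b) (insert i b) := by
  rw [Finset.disjoint_left]
  grind

theorem MMap.union_aux {Ω : Type*} [DecidableEq Ω] (a : Finset Ω) (i : Ω)
    (b : Finset Ω) (hb : b ⊆ a) : (a \ b) ⊔ (insert i b) = insert i a := by
  ext x
  simp only [Finset.sup_eq_union, Finset.mem_union, Finset.mem_sdiff, Finset.mem_insert]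
  have := @hb x
  tauto

theorem MMap.notMem_aux {Ω : Type*} [DecidableEq Ω] (a : Finset Ω) (i : Ω) (hi : i ∉ a)
    (b : Finset Ω) (q : Finpartition (a \ b)) (c : Finset Ω) (hc : c ∈ q.parts) : i ∉ c := by
  intro h
  have := q.subset hc h
  simp [hi] at this

/-- The "raising"/formal-derivative property of the cumulant: for `i ∉ a`,
`log* f(a ∪ {i}) = ∑_{b ⊆ a} f(b ∪ {i}) · f^{-1*}(a \ b)`. -/
theorem logStar_insert {Ω : Type*} [DecidableEq Ω] [Fintype Ω]
    (f : Finset Ω → ℂ) (hf : f ∅ ≠ 0) (a : Finset Ω) (i : Ω) (hi : i ∉ a) :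
    MMap.logStar f (insert i a) =
      ∑ b ∈ a.powerset, f (insert i b) * MMap.invStar f (a \ b) := by
  simp only [MMap.invStar_eq, Finset.mul_sum]
  rw [Finset.sum_sigma']
  unfold MMap.logStar
  symm
  refine Finset.sum_bij (fun x hx => x.2.extend (b := insert i x.1) (c := insert i a)
    (Finset.insert_ne_empty _ _) (MMap.disj_aux a i hi x.1)
    (MMap.union_aux a i x.1 (by simpa using hx))) ?_ ?_ ?_ ?_
  · intros
    exact Finset.mem_univ _
  · rintro ⟨b, q⟩ hb ⟨b', q'⟩ hb' h
    have h := congrArg Finpartition.parts h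
    simp only [Finpartition.extend] at h
    simp only [Finset.mem_sigma, Finset.mem_powerset, Finset.mem_univ, and_true] at hb hb'
    have hbb : b = b' := by
      have h1 : insert i b ∈ insert (insert i b') q'.parts := h ▸ Finset.mem_insert_self _ _
      rcases Finset.mem_insert.1 h1 with h1 | h1
      · have := congrArg (fun s => Finset.erase s i) h1
        simpa [Finset.erase_insert (fun h => hi (hb h)),
          Finset.erase_insert (fun h => hi (hb' h))] using this
      · exact absurd (Finset.mem_insert_self _ _) (MMap.notMem_aux a i hi b' q' _ h1)
    subst hbb
    have n1 : insert i b ∉ q.parts := fun h1 =>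
      absurd (Finset.mem_insert_self _ _) (MMap.notMem_aux a i hi b q _ h1)
    have n2 : insert i b ∉ q'.parts := fun h1 =>
      absurd (Finset.mem_insert_self _ _) (MMap.notMem_aux a i hi b q' _ h1)
    have : q = q' := by
      ext1
      rw [← Finset.erase_insert n1, h, Finset.erase_insert n2]
    rw [this]
  · intro P _
    have hm : P.part i ∈ P.parts := P.part_mem.2 (Finset.mem_insert_self _ _)
    have hip : i ∈ P.part i := P.mem_part_self.2 (Finset.mem_insert_self _ _)
    have hsub : P.part i ⊆ insert i a := P.part_subset i
    have hs : (P.parts.erase (P.part i)).sup id = a \ (P.part i).erase i := by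
      ext x
      simp only [Finset.mem_sup, Finset.mem_erase, id, Finset.mem_sdiff]
      constructor
      · rintro ⟨c, ⟨hne, hc⟩, hx⟩
        have hxp : x ∉ P.part i := fun h => hne (P.eq_of_mem_parts hc hm hx h)
        have := P.subset hc hx
        grind
      · rintro ⟨hx, hx'⟩
        obtain ⟨c, hc, hxc⟩ := P.exists_mem (Finset.mem_insert_of_mem hx : x ∈ insert i a)
        refine ⟨c, ⟨?_, hc⟩, hxc⟩
        grind
    refine ⟨⟨(P.part i).erase i, P.ofSubset (Finset.erase_subset _ _) hs⟩, ?_, ?_⟩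
    · simp only [Finset.mem_sigma, Finset.mem_powerset, Finset.mem_univ, and_true]
      grind
    · ext1
      simp only [Finpartition.extend, Finpartition.ofSubset]
      rw [Finset.insert_erase hip, Finset.insert_erase hm]
  · rintro ⟨b, q⟩ hb
    have n1 : insert i b ∉ q.parts := fun h1 =>
      absurd (Finset.mem_insert_self _ _) (MMap.notMem_aux a i hi b q _ h1)
    simp only [Finpartition.extend]
    rw [Finset.card_insert_of_notMem n1, Finset.prod_insert n1, Nat.add_sub_cancel]
    ring
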